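/- Let n ≥ 1 be an integer, 0 < α < n and γ ≥ 0. Suppose 1 ≤ p₁ ≤ q₁ < n/α, 1 ≤ s < t = n/(n−α), 1/p₂ = 1/p₁ − 1/s', and 1/q₂ = 1/q₁ − 1/t', where s' and t' are the conjugate exponents of s and t. Then there exists a constant C > 0 such that for every f ∈ L^{p₁,q₁}(ℝⁿ), ||I_{α,γ}f||_{L^{p₂,q₂}} ≤ C ||K_{α,γ}||_{L^{s,t}} ||f||_{L^{p₁,q₁}}; in particular I_{α,γ} is bounded from L^{p₁,q₁}(ℝⁿ) to L^{p₂,q₂}(ℝⁿ). -/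

import Mathlib

open MeasureTheory Metric
open scoped ENNReal NNReal

/-- The Riesz kernel `K_α(x) = |x|^{α-n}`. -/
noncomputable def rieszKernel (n : ℕ) (α : ℝ) (x : EuclideanSpace ℝ (Fin n)) : ℝ :=
  ‖x‖ ^ (α - (n : ℝ))

/-- The Bessel-Riesz kernel `K_{α,γ}(x) = |x|^{α-n} / (1+|x|)^γ`. -/
noncomputable def besselRieszKernel (n : ℕ) (α γ : ℝ) (x : EuclideanSpace ℝ (Fin n)) : ℝ :=
  ‖x‖ ^ (α - (n : ℝ)) / (1 + ‖x‖) ^ γ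

/-- The Bessel-Riesz operator `I_{α,γ} f (x) = ∫ K_{α,γ}(x-y) f(y) dy`. -/
noncomputable def besselRiesz (n : ℕ) (α γ : ℝ)
    (f : EuclideanSpace ℝ (Fin n) → ℝ) (x : EuclideanSpace ℝ (Fin n)) : ℝ :=
  ∫ y, besselRieszKernel n α γ (x - y) * f y

/-- The Morrey norm `‖f‖_{L^{p,q}} = sup_B |B|^{1/q-1/p} (∫_B |f|^p)^{1/p}`. -/
noncomputable def morreyNorm (n : ℕ) (p q : ℝ)
    (f : EuclideanSpace ℝ (Fin n) → ℝ) : ℝ≥0∞ :=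
  ⨆ (a : EuclideanSpace ℝ (Fin n)) (R : ℝ) (_ : 0 < R),
    volume (ball a R) ^ (1 / q - 1 / p) *
      (∫⁻ x in ball a R, ENNReal.ofReal (|f x| ^ p)) ^ (1 / p)

/-- The generalized Morrey norm
`‖f‖_{L^{p,φ}} = sup_B (1/φ(R)) ((1/|B|) ∫_B |f|^p)^{1/p}`. -/
noncomputable def gMorreyNorm (n : ℕ) (p : ℝ) (φ : ℝ → ℝ)
    (f : EuclideanSpace ℝ (Fin n) → ℝ) : ℝ≥0∞ :=
  ⨆ (a : EuclideanSpace ℝ (Fin n)) (R : ℝ) (_ : 0 < R),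
    (ENNReal.ofReal (φ R))⁻¹ *
      ((volume (ball a R))⁻¹ * ∫⁻ x in ball a R, ENNReal.ofReal (|f x| ^ p)) ^ (1 / p)

/-- `φ : (0,∞) → (0,∞)` is of class `G_p`: positive on `(0,∞)`, almost decreasing, and
`r ↦ φ(r)^p r^n` is almost increasing. -/
def IsClassG (n : ℕ) (p : ℝ) (φ : ℝ → ℝ) : Prop :=
  (∀ r : ℝ, 0 < r → 0 < φ r) ∧
  (∃ C : ℝ, 0 < C ∧ ∀ r s : ℝ, 0 < r → r ≤ s → C * φ s ≤ φ r) ∧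
  (∃ C : ℝ, 0 < C ∧ ∀ r s : ℝ, 0 < r → r ≤ s →
    φ r ^ p * r ^ (n : ℝ) ≤ C * (φ s ^ p * s ^ (n : ℝ)))

/-- `ρ` is almost increasing on `(0,∞)`. -/
def IsAlmostIncreasing (ρ : ℝ → ℝ) : Prop :=
  ∃ C : ℝ, 0 < C ∧ ∀ r s : ℝ, 0 < r → r ≤ s → ρ r ≤ C * ρ s

/-- Operator norm of `I_{α,γ}` from `L^{p₁,φ}` to `L^{p₂,ψ}`. -/
noncomputable def besselRieszOpNormGM (n : ℕ) (α γ p₁ p₂ : ℝ) (φ ψ : ℝ → ℝ) : ℝ≥0∞ :=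
  ⨆ f : {f : EuclideanSpace ℝ (Fin n) → ℝ //
      Measurable f ∧ gMorreyNorm n p₁ φ f ≠ 0 ∧ gMorreyNorm n p₁ φ f ≠ ⊤},
    gMorreyNorm n p₂ ψ (besselRiesz n α γ f.1) / gMorreyNorm n p₁ φ f.1

section BRHelpers

theorem br_ball_le (n : ℕ) (p q : ℝ) (f : EuclideanSpace ℝ (Fin n) → ℝ)
    (a : EuclideanSpace ℝ (Fin n)) (R : ℝ) (hR : 0 < R) :
    (∫⁻ x in ball a R, ENNReal.ofReal (|f x| ^ p)) ^ (1 / p) ≤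
      morreyNorm n p q f * volume (ball a R) ^ (1 / p - 1 / q) := by
  have h0 : volume (ball a R) ≠ 0 := (measure_ball_pos volume a hR).ne'
  have ht : volume (ball a R) ≠ ⊤ := measure_ball_lt_top.ne
  have h : volume (ball a R) ^ (1 / q - 1 / p) *
      (∫⁻ x in ball a R, ENNReal.ofReal (|f x| ^ p)) ^ (1 / p) ≤ morreyNorm n p q f :=
    le_iSup_of_le a (le_iSup_of_le R (le_iSup_of_le hR le_rfl))
  calc _ = (volume (ball a R) ^ (1 / q - 1 / p) *
      (∫⁻ x in ball a R, ENNReal.ofReal (|f x| ^ p)) ^ (1 / p)) *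
        volume (ball a R) ^ (1 / p - 1 / q) := by
        rw [mul_right_comm, ← ENNReal.rpow_add _ _ h0 ht]
        simp
    _ ≤ _ := by gcongr

theorem br_young (n : ℕ) (G H : EuclideanSpace ℝ (Fin n) → ℝ≥0∞)
    (hG : Measurable G) (hH : Measurable H) (s p₁ p₂ : ℝ)
    (hs : 1 ≤ s) (hp₁ : 1 ≤ p₁) (hp₂ : 0 < p₂)
    (h : 1 / p₂ = 1 / p₁ - (1 - 1 / s)) :
    (∫⁻ x, (∫⁻ y, G (x - y) * H y) ^ p₂) ^ (1 / p₂) ≤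
      (∫⁻ x, G x ^ s) ^ (1 / s) * (∫⁻ x, H x ^ p₁) ^ (1 / p₁) := by
  have hs' : 1 / s ≤ 1 := by rw [div_le_one (by linarith)]; exact hs
  have hp' : 1 / p₁ ≤ 1 := by rw [div_le_one (by linarith)]; exact hp₁
  have hb : 0 ≤ 1 / s - 1 / p₂ := by linarith
  have hc : 0 ≤ 1 / p₁ - 1 / p₂ := by linarith
  have hd : 0 ≤ 1 / p₂ := by positivity
  have hs0 : s ≠ 0 := by positivity
  have hp0 : p₁ ≠ 0 := by positivity
  have hq0 : p₂ ≠ 0 := by positivity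
  set B := ∫⁻ x, G x ^ s with hB
  set D := ∫⁻ x, H x ^ p₁ with hD
  have hGm : Measurable fun z : EuclideanSpace ℝ (Fin n) × EuclideanSpace ℝ (Fin n) =>
      G (z.1 - z.2) ^ s * H z.2 ^ p₁ := by fun_prop
  have key : ∀ x, ∫⁻ y, G (x - y) * H y ≤
      (∫⁻ y, G (x - y) ^ s * H y ^ p₁) ^ (1 / p₂) * (B ^ (1 / s - 1 / p₂) * D ^ (1 / p₁ - 1 / p₂)) := by
    intro x
    have := ENNReal.lintegral_prod_norm_pow_le (μ := volume) (Finset.univ : Finset (Fin 3))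
      (f := ![fun y => G (x - y) ^ s * H y ^ p₁, fun y => G (x - y) ^ s, fun y => H y ^ p₁])
      (p := ![1 / p₂, 1 / s - 1 / p₂, 1 / p₁ - 1 / p₂])
      (by
        intro i _
        fin_cases i
        · exact Measurable.aemeasurable (by simp only [Fin.zero_eta, Matrix.cons_val_zero]; fun_prop)
        · exact Measurable.aemeasurable (by simp; fun_prop)
        · exact Measurable.aemeasurable (by simp; fun_prop))
      (by simp [Fin.sum_univ_three] at h ⊢; linarith)
      (by
        intro i _
        fin_cases i
        · simpa using hd
        · simpa using hb
        · simpa using hc)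
    simp only [Fin.prod_univ_three, Matrix.cons_val_zero, Matrix.cons_val_one,
      Matrix.cons_val] at this
    have e : ∫⁻ y, G (x - y) ^ s = B := lintegral_sub_left_eq_self (fun y => G y ^ s) x
    rw [e, mul_assoc] at this
    refine le_trans (le_of_eq ?_) this
    refine lintegral_congr fun y => ?_
    rw [ENNReal.mul_rpow_of_nonneg _ _ hd]
    have e1 : G (x - y) = (G (x - y) ^ s) ^ (1 / p₂) * (G (x - y) ^ s) ^ (1 / s - 1 / p₂) := by
      rw [← ENNReal.rpow_add_of_nonneg _ _ hd hb, ← ENNReal.rpow_mul]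
      simp [hs0]
    have e2 : H y = (H y ^ p₁) ^ (1 / p₂) * (H y ^ p₁) ^ (1 / p₁ - 1 / p₂) := by
      rw [← ENNReal.rpow_add_of_nonneg _ _ hd hc, ← ENNReal.rpow_mul]
      simp [hp0]
    conv_lhs => rw [e1, e2]
    ring
  have fub : ∫⁻ x, ∫⁻ y, G (x - y) ^ s * H y ^ p₁ = B * D := by
    rw [lintegral_lintegral_swap hGm.aemeasurable]
    have : ∀ y, ∫⁻ x, G (x - y) ^ s * H y ^ p₁ = B * H y ^ p₁ := by
      intro y
      rw [lintegral_mul_const _ (by fun_prop), lintegral_sub_right_eq_self (fun y => G y ^ s) y]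
    simp_rw [this]
    rw [lintegral_const_mul _ (by fun_prop)]
  calc _ ≤ (∫⁻ x, (∫⁻ y, G (x - y) ^ s * H y ^ p₁) *
        (B ^ (1 / s - 1 / p₂) * D ^ (1 / p₁ - 1 / p₂)) ^ p₂) ^ (1 / p₂) := by
        gcongr with x
        refine (ENNReal.rpow_le_rpow (key x) hp₂.le).trans (le_of_eq ?_)
        rw [ENNReal.mul_rpow_of_nonneg _ _ hp₂.le, ← ENNReal.rpow_mul]
        simp [hq0]
    _ = (B * D) ^ (1 / p₂) * (B ^ (1 / s - 1 / p₂) * D ^ (1 / p₁ - 1 / p₂)) := by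
        rw [lintegral_mul_const _ hGm.lintegral_prod_right', fub,
          ENNReal.mul_rpow_of_nonneg _ _ hd, ← ENNReal.rpow_mul]
        simp [hq0]
    _ = B ^ (1 / s) * D ^ (1 / p₁) := by
        rw [ENNReal.mul_rpow_of_nonneg _ _ hd]
        have e1 : B ^ (1 / s) = B ^ (1 / p₂) * B ^ (1 / s - 1 / p₂) := by
          rw [← ENNReal.rpow_add_of_nonneg _ _ hd hb]; simp
        have e2 : D ^ (1 / p₁) = D ^ (1 / p₂) * D ^ (1 / p₁ - 1 / p₂) := by
          rw [← ENNReal.rpow_add_of_nonneg _ _ hd hc]; simp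
        rw [e1, e2]; ring
    _ ≤ _ := le_rfl

theorem br_enorm_rpow (u p : ℝ) (hp : 0 ≤ p) : ENNReal.ofReal (|u| ^ p) = ‖u‖ₑ ^ p := by
  rw [← ENNReal.ofReal_rpow_of_nonneg (abs_nonneg u) hp, Real.enorm_eq_ofReal_abs]

theorem br_kernel_meas (n : ℕ) (α γ : ℝ) : Measurable (besselRieszKernel n α γ) := by
  unfold besselRieszKernel; fun_prop

theorem br_kernel_norm_ne_zero (n : ℕ) (hn : 1 ≤ n) (α γ s t : ℝ) (hs : 1 ≤ s) :
    morreyNorm n s t (besselRieszKernel n α γ) ≠ 0 := by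
  intro h0
  let a : EuclideanSpace ℝ (Fin n) := EuclideanSpace.single ⟨0, hn⟩ 2
  have ha : ‖a‖ = 2 := by simp [a]
  have hb := br_ball_le n s t (besselRieszKernel n α γ) a 1 one_pos
  rw [h0, zero_mul, nonpos_iff_eq_zero, ENNReal.rpow_eq_zero_iff_of_pos (by positivity)] at hb
  have hm := br_kernel_meas n α γ
  have : 0 < ∫⁻ x in ball a 1, ENNReal.ofReal (|besselRieszKernel n α γ x| ^ s) := by
    rw [setLIntegral_pos_iff (by fun_prop)]
    refine (measure_ball_pos volume a one_pos).trans_le (measure_mono ?_)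
    intro x hx
    refine ⟨?_, hx⟩
    have hx0 : 0 < ‖x‖ := by
      rw [mem_ball, dist_eq_norm] at hx
      have := norm_sub_norm_le a x
      rw [norm_sub_rev] at this
      linarith
    have : 0 < besselRieszKernel n α γ x := by unfold besselRieszKernel; positivity
    simp only [Function.mem_support, ne_eq, ENNReal.ofReal_eq_zero, not_le]
    positivity
  exact this.ne' hb

theorem br_vol (n : ℕ) (hn : 1 ≤ n) (a : EuclideanSpace ℝ (Fin n)) (R : ℝ) (hR : 0 < R) :
    volume (ball a R) = ENNReal.ofReal R ^ (n : ℝ) *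
      volume (ball (0 : EuclideanSpace ℝ (Fin n)) 1) := by
  have : Nonempty (Fin n) := ⟨⟨0, hn⟩⟩
  rw [Measure.addHaar_ball volume a hR.le]
  simp [ENNReal.ofReal_pow hR.le]

/-- local integral bound -/
theorem br_local (n : ℕ) (p q : ℝ) (hp : 1 ≤ p) (f : EuclideanSpace ℝ (Fin n) → ℝ)
    (hf : Measurable f) (a : EuclideanSpace ℝ (Fin n)) (R : ℝ) (hR : 0 < R) :
    ∫⁻ x in ball a R, ‖f x‖ₑ ≤ morreyNorm n p q f * volume (ball a R) ^ (1 - 1 / q) := by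
  have h0 : volume (ball a R) ≠ 0 := (measure_ball_pos volume a hR).ne'
  have ht : volume (ball a R) ≠ ⊤ := measure_ball_lt_top.ne
  have hp' : 1 / p ≤ 1 := by rw [div_le_one (by linarith)]; exact hp
  have hp0 : p ≠ 0 := by positivity
  have := ENNReal.lintegral_mul_norm_pow_le (μ := volume.restrict (ball a R))
    (f := fun x => ‖f x‖ₑ ^ p) (g := fun _ => 1) (by fun_prop) (by fun_prop)
    (p := 1 / p) (q := 1 - 1 / p) (by positivity) (by linarith) (by ring)
  have e : ∀ x, (‖f x‖ₑ ^ p) ^ (1 / p) * (1 : ℝ≥0∞) ^ (1 - 1 / p) = ‖f x‖ₑ := by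
    intro x
    rw [← ENNReal.rpow_mul]; simp [hp0]
  simp only [e] at this
  refine this.trans ?_
  have h2 := br_ball_le n p q f a R hR
  simp only [br_enorm_rpow _ _ (by linarith : 0 ≤ p)] at h2
  calc _ ≤ morreyNorm n p q f * volume (ball a R) ^ (1 / p - 1 / q) *
        volume (ball a R) ^ (1 - 1 / p) := by
        gcongr
        simp
    _ = _ := by
        rw [mul_assoc, ← ENNReal.rpow_add _ _ h0 ht]
        congr 2; ring

theorem br_kernel_le (n : ℕ) (α γ : ℝ) (hαn : α < n) (hγ : 0 ≤ γ)
    (z : EuclideanSpace ℝ (Fin n)) (r : ℝ) (hr : 0 < r) (hz : r ≤ ‖z‖) :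
    ‖besselRieszKernel n α γ z‖ₑ ≤ ENNReal.ofReal r ^ (α - n) := by
  rw [ENNReal.ofReal_rpow_of_pos hr, Real.enorm_eq_ofReal_abs]
  apply ENNReal.ofReal_le_ofReal
  unfold besselRieszKernel
  rw [abs_of_nonneg (by positivity)]
  calc _ ≤ ‖z‖ ^ (α - (n : ℝ)) := by
        apply div_le_self (by positivity)
        exact Real.one_le_rpow (by linarith [norm_nonneg z]) hγ
    _ ≤ _ := Real.rpow_le_rpow_of_nonpos hr hz (by linarith)

theorem br_far (n : ℕ) (hn : 1 ≤ n) (α γ p q : ℝ) (hα0 : 0 < α) (hαn : α < n) (hγ : 0 ≤ γ)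
    (hp : 1 ≤ p) (hpq : p ≤ q) (hq : q < n / α) :
    ∃ c : ℝ≥0∞, c ≠ ⊤ ∧ ∀ f : EuclideanSpace ℝ (Fin n) → ℝ, Measurable f →
      ∀ (x : EuclideanSpace ℝ (Fin n)) (R : ℝ), 0 < R →
      ∫⁻ y in (ball x R)ᶜ, ‖besselRieszKernel n α γ (x - y)‖ₑ * ‖f y‖ₑ ≤
        c * morreyNorm n p q f * ENNReal.ofReal R ^ (α - n / q) := by
  set v := volume (ball (0 : EuclideanSpace ℝ (Fin n)) 1) with hv
  have hv0 : v ≠ 0 := (measure_ball_pos volume _ one_pos).ne'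
  have hvt : v ≠ ⊤ := measure_ball_lt_top.ne
  have hq0 : 0 < q := by linarith
  have hq1 : 1 / q ≤ 1 := by rw [div_le_one hq0]; linarith
  have hneg : α - n / q < 0 := by
    rw [lt_div_iff₀ hα0] at hq
    rw [sub_neg, lt_div_iff₀ hq0]; linarith
  refine ⟨(2 : ℝ≥0∞) ^ (n * (1 - 1 / q)) * v ^ (1 - 1 / q) * ∑' k : ℕ, ((2 : ℝ≥0∞) ^ (α - n / q)) ^ k,
    ?_, ?_⟩
  · refine ENNReal.mul_ne_top (ENNReal.mul_ne_top ?_ ?_) ?_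
    · exact ENNReal.rpow_ne_top_of_nonneg (by have : 0 ≤ 1 - 1 / q := by linarith
                                              positivity) (by simp)
    · exact ENNReal.rpow_ne_top_of_nonneg (by linarith) hvt
    · rw [ENNReal.tsum_geometric]
      simp only [ne_eq, ENNReal.inv_eq_top, tsub_eq_zero_iff_le, not_le]
      exact ENNReal.rpow_lt_one_of_one_lt_of_neg (by norm_num) hneg
  intro f hf x R hR
  have hρ0 : ENNReal.ofReal R ≠ 0 := by simpa using hR
  have hρt : ENNReal.ofReal R ≠ ⊤ := ENNReal.ofReal_ne_top
  have hK := br_kernel_meas n α γ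
  calc _ ≤ ∫⁻ y, ∑' k : ℕ, ENNReal.ofReal (2 ^ k * R) ^ (α - n) *
        (ball x (2 ^ (k + 1) * R)).indicator (fun y => ‖f y‖ₑ) y := by
        rw [← lintegral_indicator measurableSet_ball.compl]
        refine lintegral_mono fun y => ?_
        by_cases hy : y ∈ ball x R
        · simp [hy]
        · rw [Set.indicator_of_mem hy]
          rw [mem_ball, not_lt, dist_comm, dist_eq_norm] at hy
          obtain ⟨k, hk1, hk2⟩ := exists_nat_pow_near (x := ‖x - y‖ / R) (y := (2 : ℝ))
            (by rwa [le_div_iff₀ hR, one_mul]) (by norm_num)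
          rw [le_div_iff₀ hR] at hk1
          rw [div_lt_iff₀ hR] at hk2
          refine le_trans ?_ (ENNReal.le_tsum k)
          rw [Set.indicator_of_mem (by rwa [mem_ball, dist_comm, dist_eq_norm])]
          gcongr
          exact br_kernel_le n α γ hαn hγ _ _ (by positivity) hk1
    _ = ∑' k : ℕ, ENNReal.ofReal (2 ^ k * R) ^ (α - n) *
          ∫⁻ y in ball x (2 ^ (k + 1) * R), ‖f y‖ₑ := by
        rw [lintegral_tsum]
        · congr 1; ext k
          rw [lintegral_const_mul, lintegral_indicator measurableSet_ball]
          exact Measurable.indicator (by fun_prop) measurableSet_ball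
        · intro k
          refine Measurable.aemeasurable (Measurable.const_mul ?_ _)
          exact Measurable.indicator (by fun_prop) measurableSet_ball
    _ ≤ ∑' k : ℕ, (2 : ℝ≥0∞) ^ (n * (1 - 1 / q)) * v ^ (1 - 1 / q) * morreyNorm n p q f *
          ENNReal.ofReal R ^ (α - n / q) * ((2 : ℝ≥0∞) ^ (α - n / q)) ^ k := by
        refine ENNReal.tsum_le_tsum fun k => ?_
        have h1 := br_local n p q hp f hf x (2 ^ (k + 1) * R) (by positivity)
        rw [br_vol n hn x (2 ^ (k + 1) * R) (by positivity)] at h1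
        refine (mul_le_mul_right h1 _).trans (le_of_eq ?_)
        rw [← hv]
        set ρ := ENNReal.ofReal R
        have e1 : ENNReal.ofReal (2 ^ k * R) = 2 ^ (k : ℝ) * ρ := by
          rw [ENNReal.ofReal_mul (by positivity), ENNReal.ofReal_pow (by norm_num)]; simp [ρ]
        have e2 : ENNReal.ofReal (2 ^ (k + 1) * R) = 2 ^ ((k : ℝ) + 1) * ρ := by
          rw [ENNReal.ofReal_mul (by positivity), ENNReal.ofReal_pow (by norm_num)]
          simp only [ENNReal.ofReal_ofNat, ρ]
          congr 1
          exact_mod_cast (ENNReal.rpow_natCast 2 (k + 1)).symm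
        have hq1' : 0 ≤ 1 - 1 / q := by linarith
        have t0 : (2 : ℝ≥0∞) ≠ 0 := by simp
        have tt : (2 : ℝ≥0∞) ≠ ⊤ := by simp
        have f1 : (2 : ℝ≥0∞) ^ (k : ℝ) ≠ ⊤ := ENNReal.rpow_ne_top_of_nonneg (by positivity) tt
        rw [e1, e2, ENNReal.mul_rpow_of_ne_top f1 hρt, ENNReal.mul_rpow_of_nonneg _ _ hq1',
          ENNReal.mul_rpow_of_nonneg _ _ (Nat.cast_nonneg n),
          ENNReal.mul_rpow_of_nonneg _ _ hq1']
        simp only [← ENNReal.rpow_mul, ← ENNReal.rpow_natCast]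
        have e3 : (2 : ℝ≥0∞) ^ (k * (α - n)) * 2 ^ ((k + 1) * n * (1 - 1 / q)) =
            2 ^ (n * (1 - 1 / q)) * 2 ^ ((α - n / q) * k) := by
          rw [← ENNReal.rpow_add _ _ t0 tt, ← ENNReal.rpow_add _ _ t0 tt]
          congr 1; ring
        have e4 : ρ ^ (α - n) * ρ ^ (n * (1 - 1 / q)) = ρ ^ (α - n / q) := by
          rw [← ENNReal.rpow_add _ _ hρ0 hρt]
          congr 1; ring
        rw [← e4]
        calc _ = ((2 : ℝ≥0∞) ^ (k * (α - n)) * 2 ^ ((k + 1) * n * (1 - 1 / q))) *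
            (ρ ^ (α - n) * ρ ^ (n * (1 - 1 / q))) * v ^ (1 - 1 / q) * morreyNorm n p q f := by ring
          _ = _ := by rw [e3]; ring
    _ = _ := by
        rw [ENNReal.tsum_mul_left]; ring

theorem br_near (n : ℕ) (hn : 1 ≤ n) (α γ p₁ q₁ p₂ s t : ℝ)
    (hp₁ : 1 ≤ p₁) (hs : 1 ≤ s) (hp₂0 : 0 < p₂)
    (hp₂ : 1 / p₂ = 1 / p₁ - (1 - 1 / s))
    (f : EuclideanSpace ℝ (Fin n) → ℝ) (hf : Measurable f)
    (a : EuclideanSpace ℝ (Fin n)) (R : ℝ) (hR : 0 < R) :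
    (∫⁻ x in ball a R,
      (∫⁻ y in ball x R, ‖besselRieszKernel n α γ (x - y)‖ₑ * ‖f y‖ₑ) ^ p₂) ^ (1 / p₂) ≤
    (morreyNorm n s t (besselRieszKernel n α γ) * volume (ball a R) ^ (1 / s - 1 / t)) *
      (morreyNorm n p₁ q₁ f * volume (ball a (2 * R)) ^ (1 / p₁ - 1 / q₁)) := by
  have hK := br_kernel_meas n α γ
  set G : EuclideanSpace ℝ (Fin n) → ℝ≥0∞ :=
    (ball 0 R).indicator (fun z => ‖besselRieszKernel n α γ z‖ₑ) with hGd
  set H : EuclideanSpace ℝ (Fin n) → ℝ≥0∞ :=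
    (ball a (2 * R)).indicator (fun z => ‖f z‖ₑ) with hHd
  have hG : Measurable G := Measurable.indicator (by fun_prop) measurableSet_ball
  have hH : Measurable H := Measurable.indicator (by fun_prop) measurableSet_ball
  have hind : ∀ (A : Set (EuclideanSpace ℝ (Fin n))) (u : EuclideanSpace ℝ (Fin n) → ℝ) (p : ℝ),
      MeasurableSet A → 1 ≤ p →
      ∫⁻ x, (A.indicator (fun z => ‖u z‖ₑ) x) ^ p = ∫⁻ x in A, ENNReal.ofReal (|u x| ^ p) := by
    intro A u p hA hp
    rw [← lintegral_indicator hA]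
    refine lintegral_congr fun x => ?_
    by_cases hx : x ∈ A
    · simp only [Set.indicator_of_mem hx]
      rw [br_enorm_rpow _ _ (by linarith)]
    · simp only [Set.indicator_of_notMem hx]
      exact ENNReal.zero_rpow_of_pos (by linarith)
  have hY := br_young n G H hG hH s p₁ p₂ hs hp₁ hp₂0 hp₂
  rw [hGd, hHd, hind _ _ _ measurableSet_ball hs, hind _ _ _ measurableSet_ball hp₁, ← hGd,
    ← hHd] at hY
  have hv : volume (ball (0 : EuclideanSpace ℝ (Fin n)) R) = volume (ball a R) := by
    rw [br_vol n hn a R hR, br_vol n hn 0 R hR]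
  have b1 := br_ball_le n s t (besselRieszKernel n α γ) 0 R hR
  rw [hv] at b1
  have b2 := br_ball_le n p₁ q₁ f a (2 * R) (by positivity)
  refine le_trans ?_ (hY.trans (mul_le_mul' b1 b2))
  refine ENNReal.rpow_le_rpow ?_ (by positivity)
  rw [← lintegral_indicator measurableSet_ball]
  refine lintegral_mono fun x => ?_
  by_cases hx : x ∈ ball a R
  swap
  · simp only [Set.indicator_of_notMem hx, zero_le]
  simp only [Set.indicator_of_mem hx]
  refine ENNReal.rpow_le_rpow ?_ hp₂0.le
  rw [← lintegral_indicator measurableSet_ball]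
  refine lintegral_mono fun y => ?_
  by_cases hy : y ∈ ball x R
  swap
  · simp only [Set.indicator_of_notMem hy, zero_le]
  simp only [Set.indicator_of_mem hy]
  have h1 : x - y ∈ ball (0 : EuclideanSpace ℝ (Fin n)) R := by
    rw [mem_ball, dist_comm, dist_eq_norm] at hy
    simpa using hy
  have h2 : y ∈ ball a (2 * R) := by
    rw [mem_ball] at hx hy ⊢
    linarith [dist_triangle y x a]
  simp only [hGd, hHd, Set.indicator_of_mem h1, Set.indicator_of_mem h2]
  exact le_rfl

end BRHelpers

/-- boundedness of `I_{α,γ}` (for `γ ≥ 0`) from `L^{p₁,q₁}` to `L^{p₂,q₂}`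
with `‖I_{α,γ} f‖_{L^{p₂,q₂}} ≤ C ‖K_{α,γ}‖_{L^{s,t}} ‖f‖_{L^{p₁,q₁}}`, where
`1 ≤ p₁ ≤ q₁ < n/α`, `1 ≤ s < t = n/(n-α)`, `1/p₂ = 1/p₁ - 1/s'`, `1/q₂ = 1/q₁ - 1/t'`
(with `1/s' = 1 - 1/s` and `1/t' = 1 - 1/t`). -/
theorem besselRiesz_morrey_bounded (n : ℕ) (hn : 1 ≤ n) (α γ p₁ q₁ p₂ q₂ s t : ℝ)
    (hα0 : 0 < α) (hαn : α < n) (hγ : 0 ≤ γ)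
    (hp₁ : 1 ≤ p₁) (hp₁q₁ : p₁ ≤ q₁) (hq₁ : q₁ < n / α)
    (hs : 1 ≤ s) (hst : s < t) (ht : t = n / (n - α))
    (hp₂ : 1 / p₂ = 1 / p₁ - (1 - 1 / s))
    (hq₂ : 1 / q₂ = 1 / q₁ - (1 - 1 / t)) :
    ∃ C : ℝ, 0 < C ∧ ∀ f : EuclideanSpace ℝ (Fin n) → ℝ,
      Measurable f → morreyNorm n p₁ q₁ f ≠ ⊤ →
      morreyNorm n p₂ q₂ (besselRiesz n α γ f) ≤
        ENNReal.ofReal C * morreyNorm n s t (besselRieszKernel n α γ) *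
          morreyNorm n p₁ q₁ f := by
  have hq10 : 0 < q₁ := by linarith
  have hp10 : 0 < p₁ := by linarith
  have hs0 : 0 < s := by linarith
  have ht0 : 0 < t := by linarith
  have hn0 : (0 : ℝ) < n := by exact_mod_cast hn
  have htα : 1 - 1 / t = α / n := by
    rw [ht]; have : (n : ℝ) - α ≠ 0 := by linarith
    field_simp; ring
  have hst' : 1 / t < 1 / s := one_div_lt_one_div_of_lt hs0 hst
  have hpq' : 1 / q₁ ≤ 1 / p₁ := one_div_le_one_div_of_le hp10 hp₁q₁
  have hqα : α / n < 1 / q₁ := by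
    rw [lt_div_iff₀ hα0] at hq₁
    rw [div_lt_div_iff₀ hn0 hq10]; linarith
  have hp2i : 0 < 1 / p₂ := by rw [hp₂]; linarith
  have hp20 : 0 < p₂ := one_div_pos.mp hp2i
  have hp21 : 1 ≤ p₂ := by
    have h1 : 1 / p₁ ≤ 1 := by rw [div_le_one hp10]; exact hp₁
    have h2 : 1 / s ≤ 1 := by rw [div_le_one hs0]; exact hs
    have : 1 / p₂ ≤ 1 := by rw [hp₂]; linarith
    rwa [div_le_one hp20] at this
  have hq2n : (n : ℝ) * (1 / q₂) + (α - n / q₁) = 0 := by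
    rw [hq₂, htα]; field_simp; ring
  obtain ⟨c, hc, hfar⟩ := br_far n hn α γ p₁ q₁ hα0 hαn hγ hp₁ hp₁q₁ hq₁
  set κ := morreyNorm n s t (besselRieszKernel n α γ) with hκ
  have hκ0 : κ ≠ 0 := br_kernel_norm_ne_zero n hn α γ s t hs
  set v := volume (ball (0 : EuclideanSpace ℝ (Fin n)) 1) with hv
  have hv0 : v ≠ 0 := (measure_ball_pos volume _ one_pos).ne'
  have hvt : v ≠ ⊤ := measure_ball_lt_top.ne
  have hq2i : 0 ≤ 1 / q₂ := by rw [hq₂, htα]; linarith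
  obtain ⟨N, hN⟩ := ENNReal.exists_nat_mul_gt (a := κ) (b := v ^ (1 / q₂) * c) hκ0
    (ENNReal.mul_ne_top (ENNReal.rpow_ne_top_of_nonneg hq2i hvt) hc)
  have hC1 : (0 : ℝ) < 2 ^ (n * (1 / p₁ - 1 / q₁)) := by positivity
  refine ⟨2 ^ (n * (1 / p₁ - 1 / q₁)) + N, by positivity, ?_⟩
  intro f hf _
  set F := morreyNorm n p₁ q₁ f with hF
  rw [ENNReal.ofReal_add hC1.le (by positivity), ENNReal.ofReal_natCast,
    ← ENNReal.ofReal_rpow_of_pos (by norm_num), ENNReal.ofReal_ofNat, add_mul, add_mul]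
  refine iSup_le fun a => iSup_le fun R => iSup_le fun hR => ?_
  have hK := br_kernel_meas n α γ
  set V := volume (ball a R) with hV
  have hV0 : V ≠ 0 := (measure_ball_pos volume a hR).ne'
  have hVt : V ≠ ⊤ := measure_ball_lt_top.ne
  have hV2 : volume (ball a (2 * R)) = 2 ^ (n : ℝ) * V := by
    rw [hV, br_vol n hn a R hR, br_vol n hn a (2 * R) (by positivity),
      ENNReal.ofReal_mul (by norm_num), ENNReal.mul_rpow_of_nonneg _ _ (Nat.cast_nonneg n)]
    simp [mul_assoc]
  have hnear := br_near n hn α γ p₁ q₁ p₂ s t hp₁ hs hp20 hp₂ f hf a R hR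
  rw [hV2, ENNReal.mul_rpow_of_nonneg _ _ (by linarith), ← ENNReal.rpow_mul] at hnear
  set M := c * F * ENNReal.ofReal R ^ (α - n / q₁) with hM
  set Nr : EuclideanSpace ℝ (Fin n) → ℝ≥0∞ := fun x =>
    ∫⁻ y in ball x R, ‖besselRieszKernel n α γ (x - y)‖ₑ * ‖f y‖ₑ with hNr
  have hNm : Measurable Nr := by
    have e : Nr = fun x => ∫⁻ y, {z : EuclideanSpace ℝ (Fin n) × EuclideanSpace ℝ (Fin n) |
        dist z.2 z.1 < R}.indicator
        (fun z => ‖besselRieszKernel n α γ (z.1 - z.2)‖ₑ * ‖f z.2‖ₑ) (x, y) := by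
      ext x
      rw [hNr]
      simp only
      rw [← lintegral_indicator measurableSet_ball]
      rfl
    rw [e]
    refine Measurable.lintegral_prod_right' (f := Set.indicator _ _) ?_
    refine Measurable.indicator (by fun_prop) ?_
    exact measurableSet_lt (by fun_prop) (by fun_prop)
  have hpt : ∀ x, ENNReal.ofReal (|besselRiesz n α γ f x| ^ p₂) ≤ ((Nr + fun _ => M : EuclideanSpace ℝ (Fin n) → ℝ≥0∞) x) ^ p₂ := by
    intro x
    rw [br_enorm_rpow _ _ hp20.le]
    refine ENNReal.rpow_le_rpow ?_ hp20.le
    unfold besselRiesz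
    refine (enorm_integral_le_lintegral_enorm _).trans ?_
    simp only [enorm_mul]
    rw [← lintegral_add_compl _ (measurableSet_ball (x := x) (ε := R))]
    exact add_le_add le_rfl (hfar f hf x R hR)
  calc _ ≤ V ^ (1 / q₂ - 1 / p₂) * ((∫⁻ x in ball a R, Nr x ^ p₂) ^ (1 / p₂) +
        (∫⁻ x in ball a R, M ^ p₂) ^ (1 / p₂)) := by
        gcongr
        refine le_trans ?_ (ENNReal.lintegral_Lp_add_le hNm.aemeasurable
          (measurable_const (a := M)).aemeasurable hp21)
        gcongr with x
        exact hpt x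
    _ = V ^ (1 / q₂ - 1 / p₂) * (∫⁻ x in ball a R, Nr x ^ p₂) ^ (1 / p₂) +
        V ^ (1 / q₂) * M := by
        rw [mul_add]
        congr 1
        rw [setLIntegral_const, ENNReal.mul_rpow_of_nonneg _ _ hp2i.le, ← ENNReal.rpow_mul,
          mul_one_div_cancel hp20.ne', ENNReal.rpow_one, mul_comm M, ← mul_assoc,
          ← ENNReal.rpow_add _ _ hV0 hVt]
        simp
    _ ≤ _ := by
        refine add_le_add ?_ ?_
        · refine (mul_le_mul_right hnear _).trans (le_of_eq ?_)
          have e : V ^ (1 / q₂ - 1 / p₂) * V ^ (1 / s - 1 / t) * V ^ (1 / p₁ - 1 / q₁) = 1 := by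
            rw [← ENNReal.rpow_add _ _ hV0 hVt, ← ENNReal.rpow_add _ _ hV0 hVt]
            have : 1 / q₂ - 1 / p₂ + (1 / s - 1 / t) + (1 / p₁ - 1 / q₁) = 0 := by
              rw [hp₂, hq₂]; ring
            rw [this, ENNReal.rpow_zero]
          calc _ = (V ^ (1 / q₂ - 1 / p₂) * V ^ (1 / s - 1 / t) * V ^ (1 / p₁ - 1 / q₁)) *
                (2 ^ (n * (1 / p₁ - 1 / q₁)) * κ * F) := by ring
            _ = _ := by rw [e, one_mul]
        · have e : V ^ (1 / q₂) * M = v ^ (1 / q₂) * c * F := by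
            have hρ0 : ENNReal.ofReal R ≠ 0 := by simpa using hR
            have hρt : ENNReal.ofReal R ≠ ⊤ := ENNReal.ofReal_ne_top
            have e' : ENNReal.ofReal R ^ ((n : ℝ) * (1 / q₂)) *
                ENNReal.ofReal R ^ (α - n / q₁) = 1 := by
              rw [← ENNReal.rpow_add _ _ hρ0 hρt, hq2n, ENNReal.rpow_zero]
            rw [hM, hV, br_vol n hn a R hR, ENNReal.mul_rpow_of_nonneg _ _ hq2i,
              ← ENNReal.rpow_mul, ← hv]
            calc _ = (ENNReal.ofReal R ^ ((n : ℝ) * (1 / q₂)) *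
                ENNReal.ofReal R ^ (α - n / q₁)) * (v ^ (1 / q₂) * c * F) := by ring
              _ = _ := by rw [e', one_mul]
          rw [e]
          gcongr
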